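/- arXiv:1810.03061 — 2 statements merged into one kernel-verified Lean document; each statement's English description precedes it below -/
import Mathlib

section
/- Let p and (p_k)_{k∈ℕ} be Borel probability measures on SL(2,ℝ) with finite first moment (i.e. elements of P₁(SL(2,ℝ))), and suppose W₁(p_k, p) → 0 as k → ∞. Then liminf_{k→∞} λ₋(p_k) ≥ λ₋(p). In other words, the function p ↦ λ₋(p) is lower semicontinuous on P₁(SL(2,ℝ)) with respect to the Wasserstein topology. -/
open MeasureTheory Filter Topology Matrix
open scoped ENNReal

noncomputable section

abbrev SL2 : Type := Matrix.SpecialLinearGroup (Fin 2) ℝ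

/-- Topology on `SL(2,ℝ)` induced from the (finite-dimensional) space of matrices. -/
instance : TopologicalSpace SL2 :=
  TopologicalSpace.induced (fun α : SL2 => (α : Matrix (Fin 2) (Fin 2) ℝ)) inferInstance

/-- Borel σ-algebra on `SL(2,ℝ)`. -/
instance : MeasurableSpace SL2 := borel SL2

/-- The ℓ² operator norm of a 2×2 real matrix. -/
noncomputable def opNorm (A : Matrix (Fin 2) (Fin 2) ℝ) : ℝ :=
  ‖LinearMap.toContinuousLinearMap (Matrix.toEuclideanLin A)‖

/-- Distance on `SL(2,ℝ)` induced by the operator norm. -/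
noncomputable def dSL (α β : SL2) : ℝ :=
  opNorm ((α : Matrix (Fin 2) (Fin 2) ℝ) - (β : Matrix (Fin 2) (Fin 2) ℝ))

/-- The sequence `n ↦ (1/n) ∫ log (nrm (B(β_{n-1}) ⋯ B(β_1) B(β_0))) dqⁿ`. -/
noncomputable def lyapSeq {X G : Type*} [MeasurableSpace X] [Monoid G]
    (B : X → G) (nrm : G → ℝ) (q : Measure X) [SigmaFinite q] : ℕ → ℝ := fun n =>
  (n : ℝ)⁻¹ * ∫ ω : Fin n → X,
    Real.log (nrm ((List.ofFn fun i => B (ω i)).reverse.prod)) ∂(Measure.pi fun _ => q)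

/-- Top Lyapunov exponent of the i.i.d. cocycle generated by `B` with distribution `q`,
`λ₊(B,q) = lim_n (1/n) ∫ log (nrm (B(β_{n-1}) ⋯ B(β_0))) dqⁿ`. -/
noncomputable def lyapCocycle {X G : Type*} [MeasurableSpace X] [Monoid G]
    (B : X → G) (nrm : G → ℝ) (q : Measure X) [SigmaFinite q] : ℝ :=
  limUnder atTop (lyapSeq B nrm q)

/-- Top Lyapunov exponent of i.i.d. products of matrices in `SL(2,ℝ)`. -/
noncomputable def lyapPlus (p : Measure SL2) [SigmaFinite p] : ℝ :=
  lyapCocycle id (fun α : SL2 => opNorm (α : Matrix (Fin 2) (Fin 2) ℝ)) p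

/-- Bottom Lyapunov exponent of i.i.d. products of matrices in `SL(2,ℝ)`:
`λ₋(p) = lim_n (1/n) ∫ log (‖(α_{n-1}⋯α₀)⁻¹‖⁻¹) dpⁿ`. -/
noncomputable def lyapMinus (p : Measure SL2) [SigmaFinite p] : ℝ :=
  lyapCocycle id (fun α : SL2 => (opNorm ((α⁻¹ : SL2) : Matrix (Fin 2) (Fin 2) ℝ))⁻¹) p

/-- Wasserstein-1 distance of two measures, with respect to a distance function `d`:
the infimum over all couplings `π` of `μ` and `ν` of `∫ d(x,y) dπ`. -/
noncomputable def W1 {M : Type*} [MeasurableSpace M] (d : M → M → ℝ) (μ ν : Measure M) : ℝ≥0∞ :=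
  ⨅ (π : Measure (M × M)) (_ : π.map Prod.fst = μ) (_ : π.map Prod.snd = ν),
    ∫⁻ x, ENNReal.ofReal (d x.1 x.2) ∂π

/-!
In `SL(2,ℝ)` a matrix and its inverse have the same operator norm, so `λ₋` is minus the top Lyapunov
exponent, and the claim is upper semicontinuity of the latter. By Fekete's lemma the top exponent is
the infimum over `n` of the averages `(1/n) ∫ log ‖α_{n-1} ⋯ α_0‖ dpⁿ`, so it is enough to bound
each average from above under a `W₁`-small change of `p`. Given a coupling of `q` and `p` of cost
below `δ`, apply it independently at the `n` times. Expanding products gives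
`‖∏ aᵢ - ∏ bᵢ‖ ≤ ∏ (‖bᵢ‖ + ‖aᵢ - bᵢ‖) - ∏ ‖bᵢ‖`, and independence turns the expectation of the right
side into at most `(E + δ)ⁿ - Eⁿ` with `E = ∫ ‖α‖ dp`, which tends to `0` with `δ`. As all norms
are at least `1`, the logarithm is `1`-Lipschitz in the norm.
-/

section PerturbationOfProducts

variable {ι R : Type*} [NormedRing R] [NormOneClass R]

lemma norm_list_prod_map_le_prod_norm_add_norm_sub (a b : ι → R) (l : List ι) :
    ‖(l.map a).prod‖ ≤ (l.map fun i => ‖b i‖ + ‖a i - b i‖).prod := by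
  calc ‖(l.map a).prod‖ ≤ ((l.map a).map norm).prod := List.norm_prod_le _
    _ = (l.map fun i => ‖a i‖).prod := by rw [List.map_map, Function.comp_def]
    _ ≤ (l.map fun i => ‖b i‖ + ‖a i - b i‖).prod :=
      List.prod_map_le_prod_map₀ _ _ (fun _ _ => norm_nonneg _)
        fun i _ => norm_le_norm_add_norm_sub' (a i) (b i)

lemma norm_list_prod_map_sub_le (a b : ι → R) (l : List ι) :
    ‖(l.map a).prod - (l.map b).prod‖ ≤
      (l.map fun i => ‖b i‖ + ‖a i - b i‖).prod - (l.map fun i => ‖b i‖).prod := by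
  induction l with
  | nil => simp
  | cons i l ih =>
    simp only [List.map_cons, List.prod_cons]
    set P := (l.map a).prod
    set Q := (l.map b).prod
    set S := (l.map fun i => ‖b i‖ + ‖a i - b i‖).prod
    set T := (l.map fun i => ‖b i‖).prod
    have hP : ‖P‖ ≤ S := norm_list_prod_map_le_prod_norm_add_norm_sub a b l
    calc ‖a i * P - b i * Q‖ = ‖(a i - b i) * P + b i * (P - Q)‖ := by congr 1; noncomm_ring
      _ ≤ ‖a i - b i‖ * ‖P‖ + ‖b i‖ * ‖P - Q‖ :=
        norm_add_le_of_le (norm_mul_le _ _) (norm_mul_le _ _)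
      _ ≤ ‖a i - b i‖ * S + ‖b i‖ * (S - T) := by gcongr
      _ = (‖b i‖ + ‖a i - b i‖) * S - ‖b i‖ * T := by ring

end PerturbationOfProducts

lemma log_norm_le_log_norm_add_norm_sub {E : Type*} [NormedAddCommGroup E] {x y : E}
    (hx : x ≠ 0) (hy : 1 ≤ ‖y‖) : Real.log ‖x‖ ≤ Real.log ‖y‖ + ‖x - y‖ := by
  have hy₀ : 0 < ‖y‖ := one_pos.trans_le hy
  have hx₀ : 0 < ‖x‖ := norm_pos_iff.2 hx
  calc Real.log ‖x‖ = Real.log ‖y‖ + Real.log (‖x‖ / ‖y‖) := by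
        rw [Real.log_div hx₀.ne' hy₀.ne']; ring
    _ ≤ Real.log ‖y‖ + (‖x‖ / ‖y‖ - 1) := by
        gcongr; exact Real.log_le_sub_one_of_pos (div_pos hx₀ hy₀)
    _ = Real.log ‖y‖ + (‖x‖ - ‖y‖) / ‖y‖ := by rw [sub_div, div_self hy₀.ne']
    _ ≤ Real.log ‖y‖ + ‖x - y‖ / ‖y‖ := by gcongr; exact norm_sub_norm_le x y
    _ ≤ Real.log ‖y‖ + ‖x - y‖ := by gcongr; exact div_le_self (norm_nonneg _) hy

section PreservedIntegrals

variable {α β : Type*} [MeasurableSpace α] [MeasurableSpace β] {μ : Measure α} {ν : Measure β}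

lemma integral_comp_measurePreserving {E : Type*} [NormedAddCommGroup E] [NormedSpace ℝ E]
    {f : α → β} {g : β → E} (hf : MeasurePreserving f μ ν) (hg : AEStronglyMeasurable g ν) :
    ∫ x, g (f x) ∂μ = ∫ y, g y ∂ν := by
  rw [← hf.map_eq] at hg ⊢
  exact (integral_map hf.aemeasurable hg).symm

lemma measurePreserving_pi_precomp {ι κ : Type*} [Fintype ι] [Fintype κ] (q : Measure α)
    [IsProbabilityMeasure q] {e : ι → κ} (he : Function.Injective e) :
    MeasurePreserving (fun (ω : κ → α) (i : ι) => ω (e i))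
      (Measure.pi fun _ => q) (Measure.pi fun _ => q) := by
  have h_indep := (ProbabilityTheory.iIndepFun_pi (μ := fun _ : κ => q) (X := fun _ => id)
    fun _ => aemeasurable_id).precomp he
  refine ⟨by fun_prop, ?_⟩
  simp only [id] at h_indep
  rw [(ProbabilityTheory.iIndepFun_iff_map_fun_eq_pi_map fun i =>
    (measurable_pi_apply (e i)).aemeasurable).1 h_indep]
  congr! with i
  exact (measurePreserving_eval (fun _ : κ => q) (e i)).map_eq

end PreservedIntegrals

section Cocycle

variable {X G : Type*} [Monoid G]

/-- The `n`-step cocycle `B(ω_{n-1}) ⋯ B(ω_0)`, with the latest factor on the left; it is the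
product inside `lyapSeq`. -/
def cocycleProd (B : X → G) {n : ℕ} (ω : Fin n → X) : G :=
  (List.ofFn fun i => B (ω i)).reverse.prod

lemma cocycleProd_add (B : X → G) {m n : ℕ} (ω : Fin (m + n) → X) :
    cocycleProd B ω =
      cocycleProd B (fun i => ω (Fin.natAdd m i)) *
        cocycleProd B (fun i => ω (Fin.castAdd n i)) := by
  simp only [cocycleProd, List.ofFn_add, List.reverse_append, List.prod_append]
  rfl

lemma log_cocycleProd_add_le {nrm : G → ℝ} (one_le : ∀ g, 1 ≤ nrm g)
    (mul_le : ∀ g h, nrm (g * h) ≤ nrm g * nrm h) (B : X → G) {m n : ℕ} (ω : Fin (m + n) → X) :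
    Real.log (nrm (cocycleProd B ω)) ≤
      Real.log (nrm (cocycleProd B fun i => ω (Fin.castAdd n i))) +
        Real.log (nrm (cocycleProd B fun i => ω (Fin.natAdd m i))) := by
  have pos g : 0 < nrm g := one_pos.trans_le (one_le g)
  rw [cocycleProd_add, add_comm, ← Real.log_mul (pos _).ne' (pos _).ne']
  exact Real.log_le_log (pos _) (mul_le _ _)

section Representation

variable {R : Type*} [NormedRing R]

lemma norm_map_mul_le (ρ : G →* R) (g h : G) : ‖ρ (g * h)‖ ≤ ‖ρ g‖ * ‖ρ h‖ :=
  (congrArg norm (map_mul ρ g h)).trans_le (norm_mul_le _ _)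

lemma map_cocycleProd (ρ : G →* R) (B : X → G) {n : ℕ} (ω : Fin n → X) :
    ρ (cocycleProd B ω) = ((List.finRange n).reverse.map fun i => ρ (B (ω i))).prod := by
  rw [cocycleProd, map_list_prod, List.map_reverse, List.map_ofFn, List.ofFn_eq_map,
    List.map_reverse]
  rfl

variable [NormOneClass R]

lemma norm_map_cocycleProd_le (ρ : G →* R) (B : X → G) {n : ℕ} (ω : Fin n → X) :
    ‖ρ (cocycleProd B ω)‖ ≤ ∏ i, ‖ρ (B (ω i))‖ := by
  rw [map_cocycleProd]
  refine (List.norm_prod_le _).trans_eq ?_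
  rw [List.map_map, List.map_reverse, List.prod_reverse, ← List.ofFn_eq_map, List.prod_ofFn]
  rfl

lemma norm_map_cocycleProd_sub_le (ρ : G →* R) (A B : X → G) {n : ℕ} (ω : Fin n → X) :
    ‖ρ (cocycleProd A ω) - ρ (cocycleProd B ω)‖ ≤
      ∏ i, (‖ρ (B (ω i))‖ + ‖ρ (A (ω i)) - ρ (B (ω i))‖) - ∏ i, ‖ρ (B (ω i))‖ := by
  rw [map_cocycleProd, map_cocycleProd]
  refine (norm_list_prod_map_sub_le _ _ _).trans_eq ?_
  simp only [List.map_reverse, List.prod_reverse, ← List.ofFn_eq_map, List.prod_ofFn]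

end Representation

variable [MeasurableSpace X]

/-- The integral `∫ log (nrm (B(ω_{n-1}) ⋯ B(ω_0))) dqⁿ`, i.e. `lyapSeq` without the factor
`1/n`; this is the sequence to which Fekete's lemma applies. -/
def logIntegral (B : X → G) (nrm : G → ℝ) (q : Measure X) [SigmaFinite q] (n : ℕ) : ℝ :=
  ∫ ω : Fin n → X, Real.log (nrm (cocycleProd B ω)) ∂(Measure.pi fun _ => q)

lemma lyapSeq_eq_logIntegral_div (B : X → G) (nrm : G → ℝ) (q : Measure X) [SigmaFinite q] :
    lyapSeq B nrm q = fun n : ℕ => logIntegral B nrm q n / n :=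
  funext fun _ => (div_eq_inv_mul _ _).symm

lemma lyapSeq_inv (B : X → G) (nrm : G → ℝ) (q : Measure X) [SigmaFinite q] :
    lyapSeq B (fun g => (nrm g)⁻¹) q = -lyapSeq B nrm q := by
  funext n
  simp only [lyapSeq, Real.log_inv, integral_neg, mul_neg, Pi.neg_apply]

lemma logIntegral_comp {Y : Type*} [MeasurableSpace Y] {B : X → G} {nrm : G → ℝ} {f : Y → X}
    {μ : Measure Y} {q : Measure X} [SigmaFinite μ] [SigmaFinite q] (hf : MeasurePreserving f μ q)
    {n : ℕ} (h_meas : AEStronglyMeasurable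
      (fun ω : Fin n → X => Real.log (nrm (cocycleProd B ω))) (Measure.pi fun _ => q)) :
    logIntegral (fun y => B (f y)) nrm μ n = logIntegral B nrm q n :=
  integral_comp_measurePreserving (measurePreserving_pi _ _ fun _ => hf) h_meas

section Fekete

variable {B : X → G} {nrm : G → ℝ} {q : Measure X} [IsProbabilityMeasure q]
  (one_le : ∀ g, 1 ≤ nrm g) (mul_le : ∀ g h, nrm (g * h) ≤ nrm g * nrm h)
  (h_int : ∀ n, Integrable (fun ω : Fin n → X => Real.log (nrm (cocycleProd B ω)))
    (Measure.pi fun _ => q))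

include one_le

lemma logIntegral_div_nonneg (n : ℕ) : 0 ≤ logIntegral B nrm q n / n :=
  div_nonneg (integral_nonneg fun _ => Real.log_nonneg (one_le _)) n.cast_nonneg

lemma bddBelow_range_logIntegral_div :
    BddBelow (Set.range fun n : ℕ => logIntegral B nrm q n / n) :=
  ⟨0, Set.forall_mem_range.2 (logIntegral_div_nonneg one_le)⟩

include mul_le h_int

lemma subadditive_logIntegral : Subadditive (logIntegral B nrm q) := by
  intro m n
  have h_past := measurePreserving_pi_precomp q (Fin.castAdd_injective m n)
  have h_future := measurePreserving_pi_precomp q (Fin.natAdd_injective n m)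
  have int_past := h_past.integrable_comp_of_integrable (h_int m)
  have int_future := h_future.integrable_comp_of_integrable (h_int n)
  calc logIntegral B nrm q (m + n)
    _ ≤ ∫ ω : Fin (m + n) → X, (Real.log (nrm (cocycleProd B fun i => ω (Fin.castAdd n i))) +
          Real.log (nrm (cocycleProd B fun i => ω (Fin.natAdd m i)))) ∂(Measure.pi fun _ => q) :=
        integral_mono (h_int (m + n)) (int_past.add int_future)
          (log_cocycleProd_add_le one_le mul_le B)
    _ = (∫ ω : Fin (m + n) → X, Real.log (nrm (cocycleProd B fun i => ω (Fin.castAdd n i)))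
          ∂(Measure.pi fun _ => q)) +
        ∫ ω : Fin (m + n) → X, Real.log (nrm (cocycleProd B fun i => ω (Fin.natAdd m i)))
          ∂(Measure.pi fun _ => q) := integral_add int_past int_future
    _ = logIntegral B nrm q m + logIntegral B nrm q n :=
        congrArg₂ (· + ·)
          (integral_comp_measurePreserving h_past (h_int m).aestronglyMeasurable)
          (integral_comp_measurePreserving h_future (h_int n).aestronglyMeasurable)

lemma lyapCocycle_eq_lim :
    lyapCocycle B nrm q = (subadditive_logIntegral one_le mul_le h_int).lim := by
  rw [lyapCocycle, lyapSeq_eq_logIntegral_div]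
  exact (Subadditive.tendsto_lim _ (bddBelow_range_logIntegral_div one_le)).limUnder_eq

lemma tendsto_lyapSeq : Tendsto (lyapSeq B nrm q) atTop (𝓝 (lyapCocycle B nrm q)) := by
  rw [lyapCocycle_eq_lim one_le mul_le h_int, lyapSeq_eq_logIntegral_div]
  exact Subadditive.tendsto_lim _ (bddBelow_range_logIntegral_div one_le)

lemma lyapCocycle_le_logIntegral_div {n : ℕ} (hn : n ≠ 0) :
    lyapCocycle B nrm q ≤ logIntegral B nrm q n / n := by
  rw [lyapCocycle_eq_lim one_le mul_le h_int]
  exact Subadditive.lim_le_div _ (bddBelow_range_logIntegral_div one_le) hn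

lemma lyapCocycle_nonneg : 0 ≤ lyapCocycle B nrm q := by
  refine ge_of_tendsto' (tendsto_lyapSeq one_le mul_le h_int) ?_
  rw [lyapSeq_eq_logIntegral_div]
  exact logIntegral_div_nonneg one_le

lemma lyapCocycle_inv : lyapCocycle B (fun g => (nrm g)⁻¹) q = -lyapCocycle B nrm q := by
  rw [lyapCocycle, lyapSeq_inv]
  exact (tendsto_lyapSeq one_le mul_le h_int).neg.limUnder_eq

end Fekete

section MomentBounds

variable {R : Type*} [NormedRing R] {ρ : G →* R} {B : X → G}

lemma stronglyMeasurable_log_norm_cocycleProd (hB : StronglyMeasurable fun x => ρ (B x)) (n : ℕ) :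
    StronglyMeasurable fun ω : Fin n → X => Real.log ‖ρ (cocycleProd B ω)‖ := by
  have h_prod : StronglyMeasurable fun ω : Fin n → X => ρ (cocycleProd B ω) := by
    simp only [map_cocycleProd]
    induction (List.finRange n).reverse with
    | nil => exact stronglyMeasurable_const
    | cons i l ih =>
      simp only [List.map_cons, List.prod_cons]
      exact (hB.comp_measurable (measurable_pi_apply i)).mul ih
  exact (Real.measurable_log.comp h_prod.norm.measurable).stronglyMeasurable

variable [NormOneClass R] (hρ : ∀ g, 1 ≤ ‖ρ g‖) (hB : StronglyMeasurable fun x => ρ (B x))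

include hρ hB

lemma integrable_log_norm_cocycleProd {q : Measure X} [IsProbabilityMeasure q]
    (hq : Integrable (fun x => ρ (B x)) q) (n : ℕ) :
    Integrable (fun ω : Fin n → X => Real.log ‖ρ (cocycleProd B ω)‖) (Measure.pi fun _ => q) := by
  have h_prod : Integrable (fun ω : Fin n → X => ∏ i, ‖ρ (B (ω i))‖) (Measure.pi fun _ => q) :=
    Integrable.fintype_prod fun _ => hq.norm
  refine h_prod.mono' (stronglyMeasurable_log_norm_cocycleProd hB n).aestronglyMeasurable
    (ae_of_all _ fun ω => ?_)
  rw [Real.norm_of_nonneg (Real.log_nonneg (hρ _))]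
  exact (Real.log_le_self (norm_nonneg _)).trans (norm_map_cocycleProd_le ρ B ω)

lemma logIntegral_le_add_pow_sub_pow {A : X → G} {π : Measure X} [IsProbabilityMeasure π]
    (hπ : Integrable (fun x => ρ (B x)) π)
    (h_sub : Integrable (fun x => ρ (A x) - ρ (B x)) π) (n : ℕ) :
    logIntegral A (‖ρ ·‖) π n ≤ logIntegral B (‖ρ ·‖) π n +
      ((∫ x, ‖ρ (B x)‖ ∂π + ∫ x, ‖ρ (A x) - ρ (B x)‖ ∂π) ^ n - (∫ x, ‖ρ (B x)‖ ∂π) ^ n) := by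
  have int_log := integrable_log_norm_cocycleProd hρ hB hπ n
  have int_sum : Integrable (fun ω : Fin n → X =>
      ∏ i, (‖ρ (B (ω i))‖ + ‖ρ (A (ω i)) - ρ (B (ω i))‖)) (Measure.pi fun _ => π) :=
    Integrable.fintype_prod fun _ => hπ.norm.add h_sub.norm
  have int_prod : Integrable (fun ω : Fin n → X => ∏ i, ‖ρ (B (ω i))‖) (Measure.pi fun _ => π) :=
    Integrable.fintype_prod fun _ => hπ.norm
  have h_pointwise (ω : Fin n → X) : Real.log ‖ρ (cocycleProd A ω)‖ ≤
      Real.log ‖ρ (cocycleProd B ω)‖ + (∏ i, (‖ρ (B (ω i))‖ + ‖ρ (A (ω i)) - ρ (B (ω i))‖) -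
        ∏ i, ‖ρ (B (ω i))‖) := by
    have h_ne : ρ (cocycleProd A ω) ≠ 0 := norm_pos_iff.1 (one_pos.trans_le (hρ _))
    exact (log_norm_le_log_norm_add_norm_sub h_ne (hρ _)).trans
      (add_le_add_right (norm_map_cocycleProd_sub_le ρ A B ω) _)
  refine (integral_mono_of_nonneg (ae_of_all _ fun ω => Real.log_nonneg (hρ _))
    (int_log.add (int_sum.sub int_prod)) (ae_of_all _ h_pointwise)).trans_eq ?_
  rw [integral_add' int_log (int_sum.sub int_prod), integral_sub' int_sum int_prod,
    integral_fintype_prod_eq_pow (fun x => ‖ρ (B x)‖ + ‖ρ (A x) - ρ (B x)‖),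
    integral_fintype_prod_eq_pow (fun x => ‖ρ (B x)‖), Fintype.card_fin,
    integral_add hπ.norm h_sub.norm]
  rfl

end MomentBounds

end Cocycle

section Wasserstein

variable {X : Type*} [MeasurableSpace X] {μ ν : Measure X}

lemma exists_coupling_of_W1_lt {d : X → X → ℝ} {δ : ℝ} (h_nonneg : ∀ x y, 0 ≤ d x y)
    (h_meas : StronglyMeasurable fun z : X × X => d z.1 z.2)
    (h_lt : W1 d μ ν < ENNReal.ofReal δ) :
    ∃ π : Measure (X × X), MeasurePreserving Prod.fst π μ ∧ MeasurePreserving Prod.snd π ν ∧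
      Integrable (fun z => d z.1 z.2) π ∧ ∫ z, d z.1 z.2 ∂π < δ := by
  simp only [W1, iInf_lt_iff] at h_lt
  obtain ⟨π, h_fst, h_snd, h_cost⟩ := h_lt
  have h_nonneg_ae : 0 ≤ᵐ[π] fun z => d z.1 z.2 := ae_of_all _ fun z => h_nonneg z.1 z.2
  have h_int : Integrable (fun z => d z.1 z.2) π :=
    ⟨h_meas.aestronglyMeasurable,
      (hasFiniteIntegral_iff_ofReal h_nonneg_ae).2 (h_cost.trans ENNReal.ofReal_lt_top)⟩
  refine ⟨π, ⟨measurable_fst, h_fst⟩, ⟨measurable_snd, h_snd⟩, h_int, ?_⟩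
  rw [← ofReal_integral_eq_lintegral_ofReal h_int h_nonneg_ae] at h_cost
  exact (ENNReal.ofReal_lt_ofReal_iff_of_nonneg (integral_nonneg_of_ae h_nonneg_ae)).1 h_cost

lemma exists_coupling_norm_sub_of_W1_lt {E : Type*} [NormedAddCommGroup E] {f : X → E} {δ : ℝ}
    (hf : StronglyMeasurable f)
    (h_lt : W1 (fun x y => ‖f x - f y‖) μ ν < ENNReal.ofReal δ) :
    ∃ π : Measure (X × X), MeasurePreserving Prod.fst π μ ∧ MeasurePreserving Prod.snd π ν ∧
      Integrable (fun z => f z.1 - f z.2) π ∧ ∫ z, ‖f z.1 - f z.2‖ ∂π < δ := by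
  have h_sub : StronglyMeasurable fun z : X × X => f z.1 - f z.2 :=
    (hf.comp_measurable measurable_fst).sub (hf.comp_measurable measurable_snd)
  obtain ⟨π, h_fst, h_snd, h_int, h_cost⟩ :=
    exists_coupling_of_W1_lt (fun _ _ => norm_nonneg _) h_sub.norm h_lt
  exact ⟨π, h_fst, h_snd, (integrable_norm_iff h_sub.aestronglyMeasurable).1 h_int, h_cost⟩

lemma integrable_of_W1_ne_top {E : Type*} [NormedAddCommGroup E] {f : X → E}
    (hf : StronglyMeasurable f) (hν : Integrable f ν)
    (h_fin : W1 (fun x y => ‖f x - f y‖) μ ν ≠ ⊤) : Integrable f μ := by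
  obtain ⟨π, h_fst, h_snd, h_sub, -⟩ := exists_coupling_norm_sub_of_W1_lt hf
    ((ENNReal.lt_ofReal_iff_toReal_lt h_fin).2 (lt_add_one _))
  rw [← h_fst.integrable_comp hf.aestronglyMeasurable]
  exact (h_sub.add (h_snd.integrable_comp_of_integrable hν)).congr
    (ae_of_all _ fun z => sub_add_cancel (f z.1) (f z.2))

lemma eventually_integrable_of_tendsto_W1 {ι E : Type*} [NormedAddCommGroup E] {l : Filter ι}
    {q : ι → Measure X} {p : Measure X} {f : X → E} (hf : StronglyMeasurable f)
    (hp : Integrable f p) (hW : Tendsto (fun i => W1 (fun x y => ‖f x - f y‖) (q i) p) l (𝓝 0)) :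
    ∀ᶠ i in l, Integrable f (q i) := by
  filter_upwards [hW.eventually_lt_const ENNReal.zero_lt_top] with i hi
  exact integrable_of_W1_ne_top hf hp hi.ne

end Wasserstein

section Semicontinuity

variable {X G R : Type*} [MeasurableSpace X] [Monoid G] [NormedRing R] [NormOneClass R]
  {ρ : G →* R} {B : X → G}

lemma logIntegral_le_of_W1_lt {μ ν : Measure X} [IsProbabilityMeasure μ] [IsProbabilityMeasure ν]
    (hρ : ∀ g, 1 ≤ ‖ρ g‖) (hB : StronglyMeasurable fun x => ρ (B x))
    (hν : Integrable (fun x => ρ (B x)) ν) {δ : ℝ}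
    (h_lt : W1 (fun x y => ‖ρ (B x) - ρ (B y)‖) μ ν < ENNReal.ofReal δ) (n : ℕ) :
    logIntegral B (‖ρ ·‖) μ n ≤ logIntegral B (‖ρ ·‖) ν n +
      ((∫ x, ‖ρ (B x)‖ ∂ν + δ) ^ n - (∫ x, ‖ρ (B x)‖ ∂ν) ^ n) := by
  obtain ⟨π, h_fst, h_snd, h_sub, h_cost⟩ := exists_coupling_norm_sub_of_W1_lt hB h_lt
  have : IsProbabilityMeasure (π.map Prod.fst) := by rwa [h_fst.map_eq]
  have : IsProbabilityMeasure π := Measure.isProbabilityMeasure_of_map Prod.fst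
  have h_meas := stronglyMeasurable_log_norm_cocycleProd hB n
  calc logIntegral B (‖ρ ·‖) μ n
    _ = logIntegral (fun z : X × X => B z.1) (‖ρ ·‖) π n :=
        (logIntegral_comp h_fst h_meas.aestronglyMeasurable).symm
    _ ≤ logIntegral (fun z : X × X => B z.2) (‖ρ ·‖) π n +
          ((∫ z, ‖ρ (B z.2)‖ ∂π + ∫ z, ‖ρ (B z.1) - ρ (B z.2)‖ ∂π) ^ n -
            (∫ z, ‖ρ (B z.2)‖ ∂π) ^ n) :=
        logIntegral_le_add_pow_sub_pow hρ (hB.comp_measurable measurable_snd)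
          (h_snd.integrable_comp_of_integrable hν) h_sub n
    _ = logIntegral B (‖ρ ·‖) ν n +
          ((∫ x, ‖ρ (B x)‖ ∂ν + ∫ z, ‖ρ (B z.1) - ρ (B z.2)‖ ∂π) ^ n -
            (∫ x, ‖ρ (B x)‖ ∂ν) ^ n) := by
        rw [logIntegral_comp h_snd h_meas.aestronglyMeasurable,
          integral_comp_measurePreserving h_snd hB.norm.aestronglyMeasurable]
    _ ≤ logIntegral B (‖ρ ·‖) ν n +
          ((∫ x, ‖ρ (B x)‖ ∂ν + δ) ^ n - (∫ x, ‖ρ (B x)‖ ∂ν) ^ n) := by gcongr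

lemma eventually_lyapCocycle_lt {ι : Type*} {l : Filter ι} {p : Measure X} {q : ι → Measure X}
    [IsProbabilityMeasure p] [∀ i, IsProbabilityMeasure (q i)]
    (hρ : ∀ g, 1 ≤ ‖ρ g‖) (hB : StronglyMeasurable fun x => ρ (B x))
    (hp : Integrable (fun x => ρ (B x)) p)
    (hW : Tendsto (fun i => W1 (fun x y => ‖ρ (B x) - ρ (B y)‖) (q i) p) l (𝓝 0))
    {c : ℝ} (hc : lyapCocycle B (‖ρ ·‖) p < c) :
    ∀ᶠ i in l, lyapCocycle B (‖ρ ·‖) (q i) < c := by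
  set E := ∫ x, ‖ρ (B x)‖ ∂p
  have h_fekete := tendsto_lyapSeq hρ (norm_map_mul_le ρ) (integrable_log_norm_cocycleProd hρ hB hp)
  rw [lyapSeq_eq_logIntegral_div] at h_fekete
  obtain ⟨n, hn_lt, hn⟩ :=
    ((h_fekete.eventually_lt_const hc).and (eventually_ne_atTop 0)).exists
  obtain ⟨δ, hδ, hδ_pos⟩ : ∃ δ : ℝ,
      (logIntegral B (‖ρ ·‖) p n + ((E + δ) ^ n - E ^ n)) / n < c ∧ 0 < δ := by
    have h_cont : Continuous fun δ : ℝ =>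
        (logIntegral B (‖ρ ·‖) p n + ((E + δ) ^ n - E ^ n)) / n := by fun_prop
    have h_zero : (logIntegral B (‖ρ ·‖) p n + ((E + 0) ^ n - E ^ n)) / n < c := by simpa
    exact (((h_cont.tendsto 0).mono_left nhdsWithin_le_nhds).eventually_lt_const h_zero
      |>.and (self_mem_nhdsWithin (s := Set.Ioi 0))).exists
  filter_upwards [hW.eventually_lt_const (ENNReal.ofReal_pos.2 hδ_pos),
    eventually_integrable_of_tendsto_W1 hB hp hW] with i hi h_int
  calc lyapCocycle B (‖ρ ·‖) (q i)
    _ ≤ logIntegral B (‖ρ ·‖) (q i) n / n :=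
        lyapCocycle_le_logIntegral_div hρ (norm_map_mul_le ρ)
          (integrable_log_norm_cocycleProd hρ hB h_int) hn
    _ ≤ (logIntegral B (‖ρ ·‖) p n + ((E + δ) ^ n - E ^ n)) / n := by
        gcongr; exact logIntegral_le_of_W1_lt hρ hB hp hi n
    _ < c := hδ

theorem lyapMinus_lower_semicontinuous_wasserstein_general
    {ι : Type*} {l : Filter ι} [l.NeBot] {p : Measure X} {q : ι → Measure X}
    [IsProbabilityMeasure p] [∀ i, IsProbabilityMeasure (q i)]
    (hρ : ∀ g, 1 ≤ ‖ρ g‖) (hB : StronglyMeasurable fun x => ρ (B x))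
    (hp : Integrable (fun x => ρ (B x)) p)
    (hW : Tendsto (fun i => W1 (fun x y => ‖ρ (B x) - ρ (B y)‖) (q i) p) l (𝓝 0)) :
    lyapCocycle B (fun g => ‖ρ g‖⁻¹) p ≤
      liminf (fun i => lyapCocycle B (fun g => ‖ρ g‖⁻¹) (q i)) l := by
  have inv_eq {μ : Measure X} [IsProbabilityMeasure μ] (hμ : Integrable (fun x => ρ (B x)) μ) :
      lyapCocycle B (fun g => ‖ρ g‖⁻¹) μ = -lyapCocycle B (‖ρ ·‖) μ :=
    lyapCocycle_inv hρ (norm_map_mul_le ρ) (integrable_log_norm_cocycleProd hρ hB hμ)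
  have h_int := eventually_integrable_of_tendsto_W1 hB hp hW
  have h_cobdd : IsCoboundedUnder (· ≥ ·) l fun i => lyapCocycle B (fun g => ‖ρ g‖⁻¹) (q i) := by
    refine IsCoboundedUnder.of_frequently_le (a := 0) (h_int.mono fun i hi => ?_).frequently
    rw [inv_eq hi, neg_nonpos]
    exact lyapCocycle_nonneg hρ (norm_map_mul_le ρ) (integrable_log_norm_cocycleProd hρ hB hi)
  refine le_of_forall_lt_imp_le_of_dense fun b hb => le_liminf_of_le h_cobdd ?_
  rw [inv_eq hp, lt_neg] at hb
  filter_upwards [h_int, eventually_lyapCocycle_lt hρ hB hp hW hb] with i hi h_lt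
  rw [inv_eq hi]
  exact (lt_neg.2 h_lt).le

end Semicontinuity

open scoped Matrix.Norms.L2Operator

instance : BorelSpace SL2 := ⟨rfl⟩

lemma secondCountableTopology_SL2 : SecondCountableTopology SL2 :=
  have : SecondCountableTopology (Matrix (Fin 2) (Fin 2) ℝ) :=
    inferInstanceAs (SecondCountableTopology (Fin 2 → Fin 2 → ℝ))
  Topology.IsInducing.secondCountableTopology
    (f := fun α : SL2 => (α : Matrix (Fin 2) (Fin 2) ℝ)) ⟨rfl⟩

lemma stronglyMeasurable_coe_SL2 :
    StronglyMeasurable fun α : SL2 => (α : Matrix (Fin 2) (Fin 2) ℝ) :=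
  have := secondCountableTopology_SL2
  continuous_induced_dom.stronglyMeasurable

lemma integrable_coe_SL2 {p : Measure SL2} [IsFiniteMeasure p]
    (hp : ∫⁻ α, ENNReal.ofReal (dSL 1 α) ∂p < ⊤) :
    Integrable (fun α : SL2 => (α : Matrix (Fin 2) (Fin 2) ℝ)) p := by
  have h_sub : Integrable (fun α : SL2 => (1 : Matrix (Fin 2) (Fin 2) ℝ) - α) p :=
    ⟨(stronglyMeasurable_const.sub stronglyMeasurable_coe_SL2).aestronglyMeasurable,
      (hasFiniteIntegral_iff_norm _).2 hp⟩
  exact ((integrable_const 1).sub h_sub).congr (ae_of_all _ fun α => sub_sub_cancel 1 _)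

lemma l2_opNorm_adjugate_fin_two (A : Matrix (Fin 2) (Fin 2) ℝ) : ‖A.adjugate‖ = ‖A‖ := by
  let J : Matrix (Fin 2) (Fin 2) ℝ := !![0, 1; -1, 0]
  have hJ : J ∈ unitary (Matrix (Fin 2) (Fin 2) ℝ) := by
    constructor <;> ext i j <;> fin_cases i <;> fin_cases j <;>
      simp [J, Matrix.star_eq_conjTranspose, Matrix.mul_apply]
  have h_conj : A.adjugate = J * Aᴴ * star J := by
    rw [Matrix.adjugate_fin_two]
    ext i j
    fin_cases i <;> fin_cases j <;>
      simp [J, Matrix.star_eq_conjTranspose, Matrix.mul_apply, Matrix.vecMul, dotProduct]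
  rw [h_conj, CStarRing.norm_mul_mem_unitary _ (Unitary.star_mem hJ),
    CStarRing.norm_mem_unitary_mul _ hJ, Matrix.l2_opNorm_conjTranspose]

lemma norm_coe_inv_SL2 (α : SL2) :
    ‖((α⁻¹ : SL2) : Matrix (Fin 2) (Fin 2) ℝ)‖ = ‖(α : Matrix (Fin 2) (Fin 2) ℝ)‖ := by
  rw [Matrix.SpecialLinearGroup.coe_inv, l2_opNorm_adjugate_fin_two]

lemma one_le_norm_coe_SL2 (α : SL2) : 1 ≤ ‖(α : Matrix (Fin 2) (Fin 2) ℝ)‖ := by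
  refine (one_le_sq_iff₀ (norm_nonneg _)).1 ?_
  calc (1 : ℝ) = ‖((α * α⁻¹ : SL2) : Matrix (Fin 2) (Fin 2) ℝ)‖ := by simp
    _ ≤ ‖(α : Matrix (Fin 2) (Fin 2) ℝ)‖ * ‖((α⁻¹ : SL2) : Matrix (Fin 2) (Fin 2) ℝ)‖ :=
        norm_map_mul_le Matrix.SpecialLinearGroup.coeMonoidHom α α⁻¹
    _ = ‖(α : Matrix (Fin 2) (Fin 2) ℝ)‖ ^ 2 := by rw [norm_coe_inv_SL2, sq]

lemma lyapMinus_eq_lyapCocycle (p : Measure SL2) [SigmaFinite p] :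
    lyapMinus p = lyapCocycle id (fun α => ‖Matrix.SpecialLinearGroup.coeMonoidHom α‖⁻¹) p :=
  congrArg (lyapCocycle id · p) (funext fun α => congrArg Inv.inv (norm_coe_inv_SL2 α))

/-- **Lower semicontinuity of the bottom Lyapunov exponent in the Wasserstein topology.**
If `p` and the `p_k` are Borel probability measures on `SL(2,ℝ)` with finite first moment
and `W₁(p_k, p) → 0`, then `liminf_k λ₋(p_k) ≥ λ₋(p)`. -/
theorem lyapMinus_lower_semicontinuous_wasserstein
    (p : Measure SL2) (pk : ℕ → Measure SL2)
    [IsProbabilityMeasure p] [∀ k, IsProbabilityMeasure (pk k)]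
    (hp : ∫⁻ α, ENNReal.ofReal (dSL 1 α) ∂p < ⊤)
    (hpk : ∀ k, ∫⁻ α, ENNReal.ofReal (dSL 1 α) ∂(pk k) < ⊤)
    (hW : Tendsto (fun k => W1 dSL (pk k) p) atTop (𝓝 0)) :
    lyapMinus p ≤ Filter.liminf (fun k => lyapMinus (pk k)) atTop := by
  simp only [lyapMinus_eq_lyapCocycle]
  exact lyapMinus_lower_semicontinuous_wasserstein_general one_le_norm_coe_SL2
    stronglyMeasurable_coe_SL2 (integrable_coe_SL2 hp) hW
end
end

section
/- Let X = SL(2,ℝ)⁵ with the product metric d_∞((α₁,…,α₅),(β₁,…,β₅)) = max_i ‖α_i − β_i‖, and let B : X → SL(2,ℝ) be the block cocycle B(a₀,a₁,a₂,a₃,a₄) = a₄a₃a₂a₁a₀. There exist a Borel probability measure q ∈ P₁(X) and a sequence (q_n)_{n∈ℕ} in P₁(X) such that W₁(q_n, q) → 0, λ₊(B, q) > 0, and λ₊(B, q_n) = 0 for every n; in particular λ₊(B, q_n) does not converge to λ₊(B, q). -/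
open MeasureTheory Filter Topology Matrix
open scoped ENNReal

noncomputable section

/-- `X = SL(2,ℝ)⁵`. -/
abbrev X5 : Type := Fin 5 → SL2

/-- The product (sup) metric `d_∞` on `SL(2,ℝ)⁵`. -/
noncomputable def dX5 (a b : X5) : ℝ :=
  Finset.univ.sup' Finset.univ_nonempty fun i => dSL (a i) (b i)

/-- The block cocycle `B(a₀,a₁,a₂,a₃,a₄) = a₄a₃a₂a₁a₀`. -/
noncomputable def B5 (a : X5) : SL2 := (List.ofFn a).reverse.prod

/-!
Let `H = diag(eᵗ, e⁻ᵗ)` and let `R` be the quarter turn. Under the point mass at `H` the exponent is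
`|t| > 0`. Suppose instead that each letter is `R` with probability `p > 0` and `H` otherwise. Since
`R` swaps the two axes, `diag(eˢ, e⁻ˢ) R = R diag(e⁻ˢ, eˢ)`, so a random product is a rotation times
`diag(e^{tS}, e^{-tS})`, where `S` goes up by `1` at each `H` and changes sign at each `R`. The sign
changes keep the mean of `Sₙ` bounded, hence its second moment grows at most linearly and
`E|Sₙ| = O(√n)`: the exponent vanishes for every `p > 0`. As `p → 0` these laws converge in `W₁` to
the point mass at `H`. Putting the letter in one coordinate of `X` and `1` in the others makes `B`
return that letter.
-/

open ProbabilityTheory unitInterval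

section MeasureTheory

variable {X Y : Type*} [MeasurableSpace X] [MeasurableSpace Y]

theorem measurableEmbedding_of_countable [Countable Y] [MeasurableSingletonClass X] {f : Y → X}
    (hf : Measurable f) (hinj : Function.Injective f) : MeasurableEmbedding f where
  injective := hinj
  measurable := hf
  measurableSet_image' s _ := (s.to_countable.image f).measurableSet

theorem pi_dirac {ι : Type*} [Fintype ι] {X : ι → Type*} [∀ i, MeasurableSpace (X i)]
    (x : ∀ i, X i) : Measure.pi (fun i => Measure.dirac (x i)) = Measure.dirac x := by
  classical
  refine Measure.pi_eq fun s hs => ?_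
  rw [Measure.dirac_apply' _ (.univ_pi hs)]
  simp_rw [fun i => Measure.dirac_apply' (x i) (hs i)]
  simp [Set.indicator_apply, Finset.prod_ite_zero]

theorem integral_pi_fin_succ {E : Type*} [NormedAddCommGroup E] [NormedSpace ℝ E] (μ : Measure X)
    [SigmaFinite μ] {n : ℕ} {f : (Fin (n + 1) → X) → E}
    (hf : Integrable f (Measure.pi fun _ => μ)) :
    ∫ ω, f ω ∂(Measure.pi fun _ => μ) =
      ∫ x, ∫ ω : Fin n → X, f (Fin.cons x ω) ∂(Measure.pi fun _ => μ) ∂μ := by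
  have hcons := (measurePreserving_piFinSuccAbove (fun _ : Fin (n + 1) => μ) 0).symm
  rw [← hcons.integral_comp', integral_prod]
  · simp [MeasurableEquiv.piFinSuccAbove_symm_apply, Fin.insertNthEquiv]
  · exact hcons.integrable_comp_of_integrable hf

theorem lintegral_bernoulliMeasure [MeasurableSingletonClass X] (x y : X) (p : I) (f : X → ℝ≥0∞) :
    ∫⁻ z, f z ∂Ber(x, y, p) = toNNReal p * f x + toNNReal (σ p) * f y := by
  rw [bernoulliMeasure_def, lintegral_add_measure]
  simp only [lintegral_smul_measure, lintegral_dirac, ENNReal.smul_def, smul_eq_mul]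

theorem tendsto_inv_mul_integral_abs {Ω : ℕ → Type*} [∀ n, MeasurableSpace (Ω n)]
    {μ : ∀ n, Measure (Ω n)} [∀ n, IsProbabilityMeasure (μ n)] {S : ∀ n, Ω n → ℝ}
    (hS : ∀ n, MemLp (S n) 2 (μ n)) {C : ℝ} (hC : ∀ n : ℕ, ∫ ω, S n ω ^ 2 ∂μ n ≤ C * n) :
    Tendsto (fun n : ℕ => (n : ℝ)⁻¹ * ∫ ω, |S n ω| ∂μ n) atTop (𝓝 0) := by
  have hsq (n : ℕ) : ((n : ℝ)⁻¹ * ∫ ω, |S n ω| ∂μ n) ^ 2 ≤ C * (n : ℝ)⁻¹ := by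
    have hvar : (∫ ω, |S n ω| ∂μ n) ^ 2 ≤ ∫ ω, S n ω ^ 2 ∂μ n := by
      simpa [variance_eq_sub (hS n).abs] using variance_nonneg |S n| (μ n)
    calc ((n : ℝ)⁻¹ * ∫ ω, |S n ω| ∂μ n) ^ 2
        = (n : ℝ)⁻¹ ^ 2 * (∫ ω, |S n ω| ∂μ n) ^ 2 := mul_pow _ _ _
      _ ≤ (n : ℝ)⁻¹ ^ 2 * (C * n) := by gcongr; exact hvar.trans (hC n)
      _ = C * (n : ℝ)⁻¹ := by
        rcases eq_or_ne n 0 with rfl | hn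
        · simp
        · field_simp
  have hlim : Tendsto (fun n : ℕ => C * (n : ℝ)⁻¹) atTop (𝓝 0) := by
    simpa using (tendsto_inv_atTop_nhds_zero_nat (𝕜 := ℝ)).const_mul C
  exact squeeze_zero (fun n => by positivity) (fun n => Real.le_sqrt_of_sq_le (hsq n))
    (by simpa using hlim.sqrt)

end MeasureTheory

section Wasserstein

variable {X : Type*} [MeasurableSpace X]

theorem W1_dirac_le (d : X → X → ℝ) (μ : Measure X) [IsProbabilityMeasure μ] (y : X) :
    W1 d μ (Measure.dirac y) ≤ ∫⁻ x, ENNReal.ofReal (d x y) ∂μ := by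
  refine iInf₂_le_of_le (μ.map fun x => (x, y)) ?_ (iInf_le_of_le ?_ (lintegral_map_le _ _))
  · rw [Measure.map_map (by fun_prop) (by fun_prop)]
    exact Measure.map_id
  · rw [Measure.map_map (by fun_prop) (by fun_prop)]
    simp [Function.comp_def, Measure.map_const]

theorem tendsto_W1_bernoulliMeasure_dirac [MeasurableSingletonClass X] {d : X → X → ℝ} (x : X)
    {y : X} (hd : d y y = 0) :
    Tendsto (fun p : I => W1 d Ber(x, y, p) (Measure.dirac y)) (𝓝 0) (𝓝 0) := by
  have hle (p : I) :
      W1 d Ber(x, y, p) (Measure.dirac y) ≤ toNNReal p * ENNReal.ofReal (d x y) := by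
    simpa [lintegral_bernoulliMeasure, hd] using W1_dirac_le d Ber(x, y, p) y
  have hcont : Continuous fun p : I => (toNNReal p : ℝ≥0∞) * ENNReal.ofReal (d x y) :=
    (ENNReal.continuous_mul_const ENNReal.ofReal_ne_top).comp
      (ENNReal.continuous_coe.comp toNNReal_continuous)
  exact tendsto_of_tendsto_of_tendsto_of_le_of_le tendsto_const_nhds
    (hcont.tendsto' 0 0 (by simp)) (fun _ => zero_le) hle

end Wasserstein

section Lyapunov

variable {X Y G : Type*} [MeasurableSpace X] [MeasurableSpace Y] [Monoid G]

theorem lyapSeq_dirac [MeasurableSingletonClass X] (B : X → G) (nrm : G → ℝ) (x : X) (n : ℕ) :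
    lyapSeq B nrm (Measure.dirac x) n = (n : ℝ)⁻¹ * Real.log (nrm (B x ^ n)) := by
  simp [lyapSeq, pi_dirac]

theorem lyapSeq_eq_lyapSeq_comp [Countable Y] [MeasurableSingletonClass X] {q : Measure Y}
    {μ : Measure X} [SigmaFinite q] [SigmaFinite μ] {φ : Y → X} (hφ : MeasurePreserving φ q μ)
    (hinj : Function.Injective φ) (B : X → G) (nrm : G → ℝ) :
    lyapSeq B nrm μ = lyapSeq (B ∘ φ) nrm q := by
  funext n
  have hpi := measurePreserving_pi (fun _ : Fin n => q) (fun _ => μ) fun _ => hφ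
  rw [lyapSeq, ← hpi.integral_comp (measurableEmbedding_of_countable hpi.measurable
    hinj.comp_left)]
  rfl

end Lyapunov

section SL2

open scoped Matrix.Norms.L2Operator

instance inst_s9 : BorelSpace SL2 := ⟨rfl⟩

instance : T2Space SL2 :=
  inferInstanceAs (T2Space {A : Matrix (Fin 2) (Fin 2) ℝ // A.det = 1})

/-- The rotation by `π / 2`. -/
def quarterTurn : SL2 := ⟨!![0, -1; 1, 0], by simp⟩

/-- The hyperbolic one-parameter subgroup `t ↦ diag(eᵗ, e⁻ᵗ)` of `SL(2,ℝ)`. -/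
def diagExp (t : ℝ) : SL2 := ⟨.diagonal ![Real.exp t, Real.exp (-t)], by simp [← Real.exp_add]⟩

theorem coe_quarterTurn : (quarterTurn : Matrix (Fin 2) (Fin 2) ℝ) = !![0, -1; 1, 0] := rfl

theorem coe_diagExp (t : ℝ) :
    (diagExp t : Matrix (Fin 2) (Fin 2) ℝ) = Matrix.diagonal ![Real.exp t, Real.exp (-t)] := rfl

theorem diagExp_zero : diagExp 0 = 1 := by
  refine Subtype.ext ?_
  simp [coe_diagExp, ← Matrix.diagonal_one]

theorem diagExp_add (s t : ℝ) : diagExp (s + t) = diagExp s * diagExp t := by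
  refine Subtype.ext ?_
  rw [Matrix.SpecialLinearGroup.coe_mul]
  simp only [coe_diagExp]
  rw [Matrix.diagonal_mul_diagonal]
  simp [Real.exp_add, mul_comm]

theorem diagExp_pow (t : ℝ) (n : ℕ) : diagExp t ^ n = diagExp (n * t) := by
  induction n with
  | zero => simp [diagExp_zero]
  | succ n ih => rw [pow_succ, ih, ← diagExp_add]; push_cast; ring_nf

theorem diagExp_mul_quarterTurn (t : ℝ) :
    diagExp t * quarterTurn = quarterTurn * diagExp (-t) := by
  refine Subtype.ext ?_
  simp only [Matrix.SpecialLinearGroup.coe_mul, coe_diagExp, coe_quarterTurn]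
  ext i j
  fin_cases i <;> fin_cases j <;> simp [Matrix.mul_apply]

theorem quarterTurn_ne_diagExp (t : ℝ) : quarterTurn ≠ diagExp t := fun h => by
  have hentry : (0 : ℝ) = Real.exp t := by
    simpa [coe_quarterTurn, coe_diagExp] using congrArg (fun α : SL2 => α 0 0) h
  exact (Real.exp_pos t).ne hentry

theorem opNorm_eq_norm (A : Matrix (Fin 2) (Fin 2) ℝ) : opNorm A = ‖A‖ := rfl

theorem opNorm_diagExp (t : ℝ) : opNorm (diagExp t) = Real.exp |t| := by
  rw [opNorm_eq_norm, coe_diagExp, Matrix.l2_opNorm_diagonal, abs, Real.exp_monotone.map_sup]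
  simp [Pi.norm_def, Fin.univ_succ]

theorem quarterTurn_mem_unitaryGroup :
    (quarterTurn : Matrix (Fin 2) (Fin 2) ℝ) ∈ Matrix.unitaryGroup (Fin 2) ℝ := by
  rw [Matrix.mem_unitaryGroup_iff]
  ext i j
  fin_cases i <;> fin_cases j <;> simp [coe_quarterTurn, Matrix.mul_apply, Matrix.star_apply]

theorem log_opNorm_quarterTurn_pow_mul_diagExp (k : ℕ) (t : ℝ) :
    Real.log (opNorm (quarterTurn ^ k * diagExp t : SL2)) = |t| := by
  rw [Matrix.SpecialLinearGroup.coe_mul, Matrix.SpecialLinearGroup.coe_pow, opNorm_eq_norm,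
    CStarRing.norm_mem_unitary_mul _ (pow_mem quarterTurn_mem_unitaryGroup k), ← opNorm_eq_norm,
    opNorm_diagExp, Real.log_exp]

theorem lyapCocycle_dirac_of_eq_diagExp {X : Type*} [MeasurableSpace X]
    [MeasurableSingletonClass X] {B : X → SL2} {x : X} {t : ℝ} (hx : B x = diagExp t) :
    lyapCocycle B (fun α : SL2 => opNorm α) (Measure.dirac x) = |t| := by
  refine Tendsto.limUnder_eq (tendsto_const_nhds.congr' ?_)
  filter_upwards [eventually_gt_atTop 0] with n hn
  have hlog := log_opNorm_quarterTurn_pow_mul_diagExp 0 (n * t)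
  rw [pow_zero, one_mul] at hlog
  rw [lyapSeq_dirac, hx, diagExp_pow, hlog, abs_mul, Nat.abs_cast]
  field_simp

end SL2

section SwitchedSum

/-- The exponent `S` of a product of quarter turns (encoded by `true`) and `diag(eᵗ, e⁻ᵗ)` (encoded
by `false`), in units of `t`: the product is a rotation times `diag(e^{tS}, e^{-tS})`. The head of
the list is the letter that acts first, that is, the rightmost factor. -/
def switchedSum : List Bool → ℝ
  | [] => 0
  | true :: l => -switchedSum l
  | false :: l => switchedSum l + 1

/-- The law of `n` independent coin tosses, each giving `true` with probability `p`. -/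
abbrev coinTosses (p : I) (n : ℕ) : Measure (Fin n → Bool) :=
  Measure.pi fun _ => Ber(true, false, p)

theorem integral_switchedSum_succ (p : I) (n : ℕ) (f : ℝ → ℝ) :
    ∫ ω, f (switchedSum (List.ofFn ω)) ∂coinTosses p (n + 1) =
      p * ∫ ω, f (-switchedSum (List.ofFn ω)) ∂coinTosses p n +
      (1 - p) * ∫ ω, f (switchedSum (List.ofFn ω) + 1) ∂coinTosses p n := by
  rw [integral_pi_fin_succ _ .of_finite, integral_bernoulliMeasure]
  simp [switchedSum]

theorem integral_switchedSum {p : I} (hp : 0 < p) (n : ℕ) :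
    ∫ ω, switchedSum (List.ofFn ω) ∂coinTosses p n =
      (1 - p) / (2 * p) * (1 - (1 - 2 * p) ^ n) := by
  have hp' : (0 : ℝ) < p := hp
  induction n with
  | zero => simp [switchedSum]
  | succ n ih =>
    rw [integral_switchedSum_succ p n fun s => s, integral_neg,
      integral_add .of_finite .of_finite, ih]
    rw [integral_const, probReal_univ, one_smul]
    field_simp
    ring

theorem integral_switchedSum_le {p : I} (hp : 0 < p) (n : ℕ) :
    ∫ ω, switchedSum (List.ofFn ω) ∂coinTosses p n ≤ (1 - p) / p := by
  have hp' : (0 : ℝ) < p := hp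
  have hpow : |(1 - 2 * (p : ℝ)) ^ n| ≤ 1 := by
    rw [abs_pow]
    exact pow_le_one₀ (abs_nonneg _) (abs_le.2 ⟨by linarith [p.2.2], by linarith⟩)
  calc _ = (1 - (p : ℝ)) / (2 * p) * (1 - (1 - 2 * p) ^ n) := integral_switchedSum hp n
    _ ≤ (1 - (p : ℝ)) / (2 * p) * 2 := by
      gcongr
      · exact div_nonneg (sub_nonneg.2 p.2.2) (by positivity)
      · linarith [neg_abs_le ((1 - 2 * (p : ℝ)) ^ n)]
    _ = (1 - (p : ℝ)) / p := by field_simp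

theorem integral_switchedSum_sq_succ (p : I) (n : ℕ) :
    ∫ ω, switchedSum (List.ofFn ω) ^ 2 ∂coinTosses p (n + 1) =
      ∫ ω, switchedSum (List.ofFn ω) ^ 2 ∂coinTosses p n +
      (1 - p) * (2 * ∫ ω, switchedSum (List.ofFn ω) ∂coinTosses p n + 1) := by
  rw [integral_switchedSum_succ p n fun s => s ^ 2]
  simp only [neg_sq, add_sq, mul_one, one_pow]
  rw [integral_add .of_finite .of_finite, integral_add .of_finite .of_finite, integral_const_mul,
    integral_const, probReal_univ, one_smul]
  ring

theorem integral_switchedSum_sq_le {p : I} (hp : 0 < p) (n : ℕ) :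
    ∫ ω, switchedSum (List.ofFn ω) ^ 2 ∂coinTosses p n ≤ 2 / p * n := by
  have hp' : (0 : ℝ) < p := hp
  induction n with
  | zero => simp [switchedSum]
  | succ n ih =>
    have hincr :
        (1 - (p : ℝ)) * (2 * ∫ ω, switchedSum (List.ofFn ω) ∂coinTosses p n + 1) ≤ 2 / p :=
      calc _ ≤ (1 - (p : ℝ)) * (2 * ((1 - p) / p) + 1) := by
            gcongr
            · exact sub_nonneg.2 p.2.2
            · exact integral_switchedSum_le hp n
        _ = (1 - (p : ℝ)) * (2 - p) / p := by field_simp; ring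
        _ ≤ 2 / p := by
            gcongr
            nlinarith [p.2.2]
    rw [integral_switchedSum_sq_succ]
    push_cast
    linarith

end SwitchedSum

section Kifer

/-- The two letters of Kifer's example: `true` is the rotation, `false` the hyperbolic matrix. -/
def kiferLetter (t : ℝ) : Bool → SL2
  | true => quarterTurn
  | false => diagExp t

theorem exists_prod_reverse_map_kiferLetter (t : ℝ) (l : List Bool) :
    ∃ k : ℕ, (l.map (kiferLetter t)).reverse.prod =
      quarterTurn ^ k * diagExp (t * switchedSum l) := by
  induction l with
  | nil => exact ⟨0, by simp [switchedSum, diagExp_zero]⟩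
  | cons b l ih =>
    obtain ⟨k, hk⟩ := ih
    cases b with
    | true =>
      refine ⟨k + 1, ?_⟩
      simp [kiferLetter, switchedSum, hk, mul_assoc, diagExp_mul_quarterTurn, pow_succ]
    | false =>
      refine ⟨k, ?_⟩
      simp [kiferLetter, switchedSum, hk, mul_assoc, mul_add, diagExp_add]

theorem lyapSeq_kiferLetter (t : ℝ) (q : Measure Bool) [SigmaFinite q] (n : ℕ) :
    lyapSeq (kiferLetter t) (fun α : SL2 => opNorm α) q n =
      (n : ℝ)⁻¹ * ∫ ω : Fin n → Bool, |t * switchedSum (List.ofFn ω)| ∂(Measure.pi fun _ => q) := by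
  have hlog (ω : Fin n → Bool) :
      Real.log (opNorm (List.ofFn fun i => kiferLetter t (ω i)).reverse.prod) =
        |t * switchedSum (List.ofFn ω)| := by
    obtain ⟨k, hk⟩ := exists_prod_reverse_map_kiferLetter t (List.ofFn ω)
    rw [← log_opNorm_quarterTurn_pow_mul_diagExp k, ← hk, List.map_ofFn]
    rfl
  simp only [lyapSeq, hlog]

theorem tendsto_lyapSeq_kiferLetter (t : ℝ) {p : I} (hp : 0 < p) :
    Tendsto (lyapSeq (kiferLetter t) (fun α : SL2 => opNorm α) Ber(true, false, p)) atTop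
      (𝓝 0) := by
  rw [funext (lyapSeq_kiferLetter t Ber(true, false, p))]
  refine tendsto_inv_mul_integral_abs (fun n => .of_discrete) (C := t ^ 2 * (2 / p)) fun n => ?_
  simp only [mul_pow, integral_const_mul, mul_assoc]
  gcongr
  exact integral_switchedSum_sq_le hp n

theorem lyapCocycle_bernoulliMeasure_eq_zero {X : Type*} [MeasurableSpace X]
    [MeasurableSingletonClass X] {B : X → SL2} {x y : X} {t : ℝ} (hx : B x = quarterTurn)
    (hy : B y = diagExp t) {p : I} (hp : 0 < p) :
    lyapCocycle B (fun α : SL2 => opNorm α) Ber(x, y, p) = 0 := by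
  let φ : Bool → X := fun b => cond b x y
  have hφ : MeasurePreserving φ Ber(true, false, p) Ber(x, y, p) :=
    ⟨.of_discrete, by simp [φ]⟩
  have hBφ : B ∘ φ = kiferLetter t := by
    funext b
    cases b <;> simp [φ, kiferLetter, hx, hy]
  have hinj : Function.Injective φ := Bool.injective_iff.2 fun h : y = x =>
    quarterTurn_ne_diagExp t (by rw [← hx, ← hy, h])
  rw [lyapCocycle, lyapSeq_eq_lyapSeq_comp hφ hinj, hBφ]
  exact (tendsto_lyapSeq_kiferLetter t hp).limUnder_eq

end Kifer

theorem B5_mulSingle (i : Fin 5) (α : SL2) : B5 (Pi.mulSingle i α) = α := by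
  fin_cases i <;> simp [B5, List.ofFn_succ, Pi.mulSingle_apply]

theorem dX5_self (x : X5) : dX5 x x = 0 := by
  simp [dX5, dSL, opNorm]

/-- **Discontinuity of `λ₊(B,·)` in the Wasserstein topology on `P₁(SL(2,ℝ)⁵)`.**
There are Borel probability measures `q`, `q_n` on `X = SL(2,ℝ)⁵` with finite first
moment such that `W₁(q_n, q) → 0`, `λ₊(B, q) > 0`, and `λ₊(B, q_n) = 0` for every `n`;
in particular `λ₊(B, q_n)` does not converge to `λ₊(B, q)`. -/
theorem lyapPlus_block5_not_continuous_wasserstein :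
    ∃ (q : ProbabilityMeasure X5) (qn : ℕ → ProbabilityMeasure X5),
      (∫⁻ x, ENNReal.ofReal (dX5 (fun _ => 1) x) ∂(q : Measure X5) < ⊤) ∧
      (∀ n, ∫⁻ x, ENNReal.ofReal (dX5 (fun _ => 1) x) ∂(qn n : Measure X5) < ⊤) ∧
      Tendsto (fun n => W1 dX5 (qn n : Measure X5) (q : Measure X5)) atTop (𝓝 0) ∧
      0 < lyapCocycle B5 (fun α : SL2 => opNorm (α : Matrix (Fin 2) (Fin 2) ℝ))
            (q : Measure X5) ∧
      (∀ n, lyapCocycle B5 (fun α : SL2 => opNorm (α : Matrix (Fin 2) (Fin 2) ℝ))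
            (qn n : Measure X5) = 0) := by
  obtain ⟨p, -, hp, hp_lim⟩ := exists_seq_strictAnti_tendsto' (zero_lt_one' I)
  let x : X5 := Pi.mulSingle 0 quarterTurn
  let y : X5 := Pi.mulSingle 0 (diagExp 1)
  refine ⟨⟨Measure.dirac y, inferInstance⟩, fun n => ⟨Ber(x, y, p n), inferInstance⟩,
    ?_, fun n => ?_, ?_, ?_, fun n => ?_⟩
  · simp [lintegral_dirac]
  · simp [lintegral_bernoulliMeasure, ENNReal.mul_lt_top]
  · exact (tendsto_W1_bernoulliMeasure_dirac x (dX5_self y)).comp hp_lim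
  · exact (abs_pos.2 one_ne_zero).trans_eq (lyapCocycle_dirac_of_eq_diagExp (B5_mulSingle 0 _)).symm
  · exact lyapCocycle_bernoulliMeasure_eq_zero (B5_mulSingle 0 _) (B5_mulSingle 0 _) (hp n).1
end
end
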